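/- The 𝕜-bilinear bracket on the free 𝕜-module with basis {w_x : x ∈ ℤ² ∖ {(0,0)}} defined by [w_x, w_y] = {det(x y)} w_{x+y} (with the convention w_{(0,0)} := 0) is alternating ([v,v] = 0 for all v) and satisfies the Jacobi identity; in particular it makes this free module into a Lie algebra over 𝕜 (the elliptic Hall Lie algebra 𝔢). -/

import Mathlib

/-!
STATEMENT 0: The 𝕜-bilinear bracket on the free 𝕜-module with basis
`{w_x : x ∈ ℤ² ∖ {(0,0)}}` defined by `[w_x, w_y] = {det(x y)} w_{x+y}`
(with `w_{(0,0)} := 0`) is alternating and satisfies the Jacobi identity;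
in particular it makes this free module into a Lie algebra over 𝕜.
-/

namespace EHAProj

noncomputable section

variable (𝕜 : Type*) [CommRing 𝕜]

/-- `{d} := q^d - q^{-d}`. -/
def qint (q : 𝕜ˣ) (d : ℤ) : 𝕜 := ((q ^ d : 𝕜ˣ) : 𝕜) - ((q ^ (-d) : 𝕜ˣ) : 𝕜)

/-- The determinant of the 2×2 integer matrix with columns `x` and `y`. -/
def det2 (x y : ℤ × ℤ) : ℤ := x.1 * y.2 - x.2 * y.1

/-- The index set `ℤ² ∖ {(0,0)}`. -/
abbrev Idx : Type := {x : ℤ × ℤ // x ≠ 0}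

/-- The free `𝕜`-module with basis indexed by `ℤ² ∖ {(0,0)}`. -/
abbrev EH0 : Type _ := Idx →₀ 𝕜

variable {𝕜}

/-- The basis elements `w_x`, with the convention `w_{(0,0)} = 0`. -/
def w (x : ℤ × ℤ) : EH0 𝕜 :=
  if h : x = 0 then 0 else Finsupp.single (⟨x, h⟩ : Idx) (1 : 𝕜)

/-- The bracket `[w_x, w_y] = {det(x y)} w_{x+y}`, extended bilinearly. -/
def ehBracket (q : 𝕜ˣ) (f g : EH0 𝕜) : EH0 𝕜 :=
  Finsupp.sum f fun x a => Finsupp.sum g fun y b =>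
    (a * b * qint 𝕜 q (det2 x.1 y.1)) • w (x.1 + y.1)

theorem eh_add_left (q : 𝕜ˣ) (f g h : EH0 𝕜) :
    ehBracket q (f + g) h = ehBracket q f h + ehBracket q g h := by
  unfold ehBracket
  apply Finsupp.sum_add_index'
  · intro x; simp
  · intro x a b
    rw [← Finsupp.sum_add]
    simp only [add_mul, add_smul]

theorem eh_add_right (q : 𝕜ˣ) (f g h : EH0 𝕜) :
    ehBracket q f (g + h) = ehBracket q f g + ehBracket q f h := by
  unfold ehBracket
  rw [← Finsupp.sum_add]
  congr 1
  funext x a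
  apply Finsupp.sum_add_index'
  · intro y; simp
  · intro y b c
    simp only [mul_add, add_mul, add_smul]

theorem eh_smul_left (q : 𝕜ˣ) (c : 𝕜) (f g : EH0 𝕜) :
    ehBracket q (c • f) g = c • ehBracket q f g := by
  unfold ehBracket
  rw [Finsupp.sum_smul_index' (by intro x; simp), Finsupp.smul_sum]
  simp only [Finsupp.smul_sum, smul_smul, smul_eq_mul, mul_assoc]

theorem eh_smul_right (q : 𝕜ˣ) (c : 𝕜) (f g : EH0 𝕜) :
    ehBracket q f (c • g) = c • ehBracket q f g := by
  unfold ehBracket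
  rw [Finsupp.smul_sum]
  congr 1
  funext x a
  rw [Finsupp.sum_smul_index' (by intro x; simp), Finsupp.smul_sum]
  simp only [smul_smul, smul_eq_mul, mul_assoc, mul_left_comm]

theorem eh_zero_left (q : 𝕜ˣ) (g : EH0 𝕜) : ehBracket q 0 g = 0 := by
  simp [ehBracket]

theorem eh_zero_right (q : 𝕜ˣ) (g : EH0 𝕜) : ehBracket q g 0 = 0 := by
  simp [ehBracket]

theorem qint_zero (q : 𝕜ˣ) : qint 𝕜 q 0 = 0 := by simp [qint]

theorem eh_w (q : 𝕜ˣ) (x y : ℤ × ℤ) :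
    ehBracket q (w x) (w y) = qint 𝕜 q (det2 x y) • w (x + y) := by
  by_cases hx : x = 0
  · subst hx
    have h : det2 0 y = 0 := by simp [det2]
    have h0 : (w 0 : EH0 𝕜) = 0 := by simp [w]
    rw [h0, eh_zero_left, h, qint_zero, zero_smul]
  by_cases hy : y = 0
  · subst hy
    have h : det2 x 0 = 0 := by simp [det2]
    have h0 : (w 0 : EH0 𝕜) = 0 := by simp [w]
    rw [h0, eh_zero_right, h, qint_zero, zero_smul]
  have h1 : (w x : EH0 𝕜) = Finsupp.single (⟨x, hx⟩ : Idx) 1 := by simp [w, hx]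
  have h2 : (w y : EH0 𝕜) = Finsupp.single (⟨y, hy⟩ : Idx) 1 := by simp [w, hy]
  rw [h1, h2, ehBracket, Finsupp.sum_single_index (by simp),
    Finsupp.sum_single_index (by simp)]
  simp

/-- Induction principle: a predicate closed under sums, scalars, and holding on the `w x`. -/
theorem eh_induction {P : EH0 𝕜 → Prop} (f : EH0 𝕜) (h0 : P 0)
    (hadd : ∀ f g, P f → P g → P (f + g)) (hs : ∀ (c : 𝕜) f, P f → P (c • f))
    (hw : ∀ x, P (w x)) : P f := by
  induction f using Finsupp.induction_linear with
  | zero => exact h0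
  | add f g hf hg => exact hadd f g hf hg
  | single x a =>
    have : (Finsupp.single x a : EH0 𝕜) = a • w x.1 := by simp [w, x.2]
    rw [this]
    exact hs _ _ (hw _)

theorem qint_neg (q : 𝕜ˣ) (d : ℤ) : qint 𝕜 q (-d) = - qint 𝕜 q d := by simp [qint]

theorem eh_antisymm (q : 𝕜ˣ) (f g : EH0 𝕜) : ehBracket q f g + ehBracket q g f = 0 := by
  induction f using eh_induction with
  | h0 => simp [eh_zero_left, eh_zero_right]
  | hadd a b ha hb =>
    rw [eh_add_left, eh_add_right, add_add_add_comm, ha, hb, add_zero]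
  | hs c a ha => rw [eh_smul_left, eh_smul_right, ← smul_add, ha, smul_zero]
  | hw x =>
    induction g using eh_induction with
    | h0 => simp [eh_zero_left, eh_zero_right]
    | hadd a b ha hb =>
      rw [eh_add_left, eh_add_right, add_add_add_comm, ha, hb, add_zero]
    | hs c a ha => rw [eh_smul_left, eh_smul_right, ← smul_add, ha, smul_zero]
    | hw y =>
      have h : det2 y x = - det2 x y := by simp only [det2]; ring
      rw [eh_w, eh_w, h, qint_neg, add_comm y x, neg_smul, add_neg_cancel]

theorem eh_self (q : 𝕜ˣ) (f : EH0 𝕜) : ehBracket q f f = 0 := by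
  induction f using eh_induction with
  | h0 => exact eh_zero_left q 0
  | hadd a b ha hb =>
    rw [eh_add_left, eh_add_right, eh_add_right, ha, hb, zero_add, add_zero, eh_antisymm]
  | hs c a ha => rw [eh_smul_left, eh_smul_right, ha, smul_zero, smul_zero]
  | hw x =>
    have h : det2 x x = 0 := by simp only [det2]; ring
    rw [eh_w, h, qint_zero, zero_smul]

theorem qint_jacobi (q : 𝕜ˣ) (a b c : ℤ) :
    qint 𝕜 q a * qint 𝕜 q (b - c) + qint 𝕜 q b * qint 𝕜 q (c - a)
      + qint 𝕜 q c * qint 𝕜 q (a - b) = 0 := by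
  simp only [qint, neg_sub, zpow_sub, Units.val_mul, zpow_neg]
  ring

theorem eh_jacobi (q : 𝕜ˣ) (f g h : EH0 𝕜) :
    ehBracket q (ehBracket q f g) h + ehBracket q (ehBracket q g h) f +
      ehBracket q (ehBracket q h f) g = 0 := by
  have key : ∀ a b c a' b' c' : EH0 𝕜, a + b + c = 0 → a' + b' + c' = 0 →
      (a + a') + (b + b') + (c + c') = 0 := by
    intro a b c a' b' c' h h'
    have : (a + a') + (b + b') + (c + c') = (a + b + c) + (a' + b' + c') := by abel
    rw [this, h, h', add_zero]
  induction f using eh_induction with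
  | h0 => simp [eh_zero_left, eh_zero_right]
  | hadd a b ha hb => simp only [eh_add_left, eh_add_right]; exact key _ _ _ _ _ _ ha hb
  | hs c a ha => simp only [eh_smul_left, eh_smul_right, ← smul_add, ha, smul_zero]
  | hw x =>
  induction g using eh_induction with
  | h0 => simp [eh_zero_left, eh_zero_right]
  | hadd a b ha hb => simp only [eh_add_left, eh_add_right]; exact key _ _ _ _ _ _ ha hb
  | hs c a ha => simp only [eh_smul_left, eh_smul_right, ← smul_add, ha, smul_zero]
  | hw y =>
  induction h using eh_induction with
  | h0 => simp [eh_zero_left, eh_zero_right]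
  | hadd a b ha hb => simp only [eh_add_left, eh_add_right]; exact key _ _ _ _ _ _ ha hb
  | hs c a ha => simp only [eh_smul_left, eh_smul_right, ← smul_add, ha, smul_zero]
  | hw z =>
    have h1 : det2 (x + y) z = det2 y z - det2 z x := by
      simp only [det2, Prod.fst_add, Prod.snd_add]; ring
    have h2 : det2 (y + z) x = det2 z x - det2 x y := by
      simp only [det2, Prod.fst_add, Prod.snd_add]; ring
    have h3 : det2 (z + x) y = det2 x y - det2 y z := by
      simp only [det2, Prod.fst_add, Prod.snd_add]; ring
    have e2 : y + z + x = x + y + z := by abel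
    have e3 : z + x + y = x + y + z := by abel
    simp only [eh_w, eh_smul_left, smul_smul]
    rw [h1, h2, h3, e2, e3, ← add_smul, ← add_smul, qint_jacobi, zero_smul]

/-- The bracket determined by `[w_x, w_y] = {det(x y)} w_{x+y}` is `𝕜`-bilinear, is
alternating, and satisfies the Jacobi identity; hence it makes the free `𝕜`-module with
basis `{w_x : x ∈ ℤ² ∖ {(0,0)}}` into a Lie algebra over `𝕜`. -/
theorem ehBracket_isLieBracket {𝕜 : Type*} [CommRing 𝕜] [IsDomain 𝕜] (q : 𝕜ˣ) :
    -- the bracket takes the prescribed values on the basis elements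
    (∀ x y : ℤ × ℤ, ehBracket q (w x) (w y) = qint 𝕜 q (det2 x y) • w (x + y)) ∧
    -- the bracket is additive in each variable
    (∀ f g h : EH0 𝕜, ehBracket q (f + g) h = ehBracket q f h + ehBracket q g h) ∧
    (∀ f g h : EH0 𝕜, ehBracket q f (g + h) = ehBracket q f g + ehBracket q f h) ∧
    -- the bracket is `𝕜`-homogeneous in each variable
    (∀ (c : 𝕜) (f g : EH0 𝕜), ehBracket q (c • f) g = c • ehBracket q f g) ∧
    (∀ (c : 𝕜) (f g : EH0 𝕜), ehBracket q f (c • g) = c • ehBracket q f g) ∧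
    -- the bracket is alternating
    (∀ f : EH0 𝕜, ehBracket q f f = 0) ∧
    -- the bracket satisfies the Jacobi identity
    (∀ f g h : EH0 𝕜,
      ehBracket q (ehBracket q f g) h + ehBracket q (ehBracket q g h) f +
        ehBracket q (ehBracket q h f) g = 0) :=
  ⟨eh_w q, eh_add_left q, eh_add_right q, eh_smul_left q, eh_smul_right q, eh_self q,
    eh_jacobi q⟩

end
end EHAProj
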